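/- arXiv:2501.17389 — 4 statements merged into one kernel-verified Lean document; each statement's English description precedes it below -/
import Mathlib

section
/- Let r be a relation on Fin n (n ≥ 1) that is strongly connected, meaning that for any two vertices i, j there is a directed walk of positive length from i to j. Suppose some vertex w has at least two out-neighbors, i.e., the set {u : r w u} has cardinality at least 2. Then for every vertex v, the number of directed walks of length n starting at v (with arbitrary endpoint) is at least 2. -/
/-!
A branching vertex `w` reachable from `i` is reached by a path without repeated vertices, which has
at most as many vertices as the graph. Continuing it through different out-neighbors of `w`, and
then forever, gives walks that already differ at the step after `w`.
-/

open Relation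

variable {α : Type*} {r : α → α → Prop}

theorem exists_nodup_isChain_cons_of_relationReflTransGen {a b : α} (h : ReflTransGen r a b) :
    ∃ l : List α, (a :: l).IsChain r ∧ (a :: l).Nodup ∧ b ∈ (a :: l).getLast? := by
  induction h using ReflTransGen.head_induction_on with
  | refl => exact ⟨[], by simp⟩
  | @head a c hac _ ih =>
    obtain ⟨l, hchain, hnodup, hlast⟩ := ih
    by_cases ha : a ∈ c :: l
    · obtain ⟨s, t, hst⟩ := List.append_of_mem ha
      rw [hst] at hchain hnodup hlast
      exact ⟨t, hchain.right_of_append, hnodup.of_append_right, by simpa using hlast⟩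
    · exact ⟨c :: l, hchain.cons_cons hac, hnodup.cons ha, by simpa using hlast⟩

theorem reflTransGen_of_forall_castSucc_succ {m : ℕ} {v : Fin (m + 1) → α}
    (hv : ∀ k : Fin m, r (v k.castSucc) (v k.succ)) (k : Fin (m + 1)) :
    ReflTransGen r (v 0) (v k) := by
  induction k using Fin.induction with
  | zero => exact .refl
  | succ k ih => exact ih.tail (hv k)

/-- Infinite directed walks in the graph of `r`. They serve as a supply of walks of every finite
length. -/
def IsInfiniteWalk (r : α → α → Prop) (x : Stream' α) : Prop :=
  ∀ k, r (x.get k) (x.get (k + 1))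

namespace IsInfiniteWalk

theorem exists_head_eq (hr : ∀ a, ∃ b, r a b) (a : α) :
    ∃ x : Stream' α, x.head = a ∧ IsInfiniteWalk r x := by
  choose f hf using hr
  refine ⟨Stream'.iterate f a, rfl, fun k => ?_⟩
  rw [Stream'.get_succ_iterate']
  exact hf _

theorem cons {x : Stream' α} (hx : IsInfiniteWalk r x) {a : α} (ha : r a x.head) :
    IsInfiniteWalk r (x.cons a)
  | 0 => ha
  | k + 1 => hx k

theorem append {x : Stream' α} (hx : IsInfiniteWalk r x) {l : List α} (hl : l.IsChain r)
    (hlx : ∀ a ∈ l.getLast?, r a x.head) : IsInfiniteWalk r (l ++ₛ x) := by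
  induction l with
  | nil => exact hx
  | cons a l ih =>
    cases l with
    | nil => exact hx.cons (hlx a rfl)
    | cons b l => exact (ih hl.tail (by simpa using hlx)).cons hl.rel

end IsInfiniteWalk

theorem two_walks_of_length_n_general [Finite α] (hr : ∀ a, ∃ b, r a b) {i w : α}
    (hiw : ReflTransGen r i w) {m : ℕ} (hm : Nat.card α ≤ m) :
    Nat.card {u // r w u} ≤ Nat.card {v : Fin (m + 1) → α //
      v 0 = i ∧ ∀ k : Fin m, r (v k.castSucc) (v k.succ)} := by
  obtain ⟨l, hchain, hnodup, hlast⟩ := exists_nodup_isChain_cons_of_relationReflTransGen hiw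
  have hlen : (i :: l).length ≤ m := hnodup.length_le_natCard.trans hm
  choose x hx_head hx using IsInfiniteWalk.exists_head_eq hr
  have hwalk (u : {u // r w u}) : IsInfiniteWalk r ((i :: l) ++ₛ x u) :=
    (hx u).append hchain fun a ha => by
      rw [Option.mem_unique ha hlast, hx_head]
      exact u.2
  refine Nat.card_le_card_of_injective
    (fun u => ⟨fun k => ((i :: l) ++ₛ x u).get k, rfl, fun k => hwalk u k⟩) fun u u' h => ?_
  have hget : ((i :: l) ++ₛ x u).get (i :: l).length = ((i :: l) ++ₛ x u').get (i :: l).length :=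
    congrFun (congrArg Subtype.val h) ⟨_, Nat.lt_succ_of_le hlen⟩
  simpa only [Stream'.get_append_length, hx_head, Subtype.ext_iff] using hget

/-- In a strongly connected directed graph on `n ≥ 1` vertices in which some
vertex has at least two out-neighbors, every vertex is the starting point of at
least two directed walks of length `n`. -/
theorem two_walks_of_length_n {n : ℕ} (hn : 1 ≤ n) (r : Fin n → Fin n → Prop)
    (hconn : ∀ i j : Fin n, ∃ m : ℕ, 1 ≤ m ∧ ∃ v : Fin (m + 1) → Fin n,
      v 0 = i ∧ v (Fin.last m) = j ∧ ∀ k : Fin m, r (v k.castSucc) (v k.succ))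
    (w : Fin n) (hw : 2 ≤ Nat.card {u : Fin n // r w u}) :
    ∀ i : Fin n,
      2 ≤ Nat.card {v : Fin (n + 1) → Fin n //
        v 0 = i ∧ ∀ k : Fin n, r (v k.castSucc) (v k.succ)} := by
  intro i
  have hserial : ∀ a, ∃ b, r a b := fun a => by
    obtain ⟨m, hm, v, rfl, -, hv⟩ := hconn a a
    exact ⟨_, hv ⟨0, hm⟩⟩
  have hreach : ReflTransGen r i w := by
    obtain ⟨m, -, v, rfl, rfl, hv⟩ := hconn i w
    exact reflTransGen_of_forall_castSucc_succ hv _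
  exact hw.trans (two_walks_of_length_n_general hserial hreach (Nat.card_fin n).le)
end

section
/- Let B be an n × n matrix with nonnegative integer entries that is irreducible, and suppose some row of B has sum at least 2, i.e., there exists i₀ with ∑_j B_{i₀ j} ≥ 2. Then every row of B^n has sum at least 2: for every index i, ∑_j (B^n)_{ij} ≥ 2. -/
/-- A square matrix with nonnegative entries is irreducible if for all indices
`i, j` some power `M ^ m` (`m ≥ 1`) has a strictly positive `(i,j)` entry. -/
def MatIrreducible {n : ℕ} (M : Matrix (Fin n) (Fin n) ℕ) : Prop :=
  ∀ i j : Fin n, ∃ m : ℕ, 1 ≤ m ∧ 0 < (M ^ m) i j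

/-!
Fix a row `j`, of sum `c`, and let `S k` be the set of rows of `M ^ (k + 1)` with sum at least `c`.
All row sums of `M` are at least `1`, so `S` is increasing; it starts with `j ∈ S 0`, so two
consecutive terms `S k = S (k + 1)` agree for some `k` less than the size of the matrix. If
`M i l ≠ 0`, hence `1 ≤ M i l`, and `l ∈ S k`, then `i ∈ S (k + 1) = S k`, so `S k` contains every
index from which `j` can be reached.
-/

lemma exists_lt_card_eq_succ_of_monotone {α : Type*} [Fintype α] {S : ℕ → Finset α}
    (hS : Monotone S) (h₀ : (S 0).Nonempty) : ∃ k < Fintype.card α, S k = S (k + 1) := by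
  by_contra! hne
  have hcard : ∀ k ≤ Fintype.card α, k < (S k).card := by
    intro k
    induction k with
    | zero => exact fun _ ↦ h₀.card_pos
    | succ k ih =>
      intro hk
      have hlt : (S k).card < (S (k + 1)).card :=
        Finset.card_lt_card ((hS k.le_succ).ssubset_of_ne (hne k hk))
      exact (Nat.succ_le_of_lt (ih (Nat.le_of_succ_le hk))).trans_lt hlt
  exact (hcard _ le_rfl).not_ge (Finset.card_le_univ _)

section Mul

variable {l m n R : Type*} [Fintype m]

lemma exists_apply_ne_zero_of_mul_apply_ne_zero [NonUnitalNonAssocSemiring R] {M : Matrix l m R}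
    {N : Matrix m n R} {i : l} {k : n} (h : (M * N) i k ≠ 0) : ∃ j, M i j ≠ 0 ∧ N j k ≠ 0 := by
  rw [Matrix.mul_apply] at h
  obtain ⟨j, -, hj⟩ := Finset.exists_ne_zero_of_sum_ne_zero h
  exact ⟨j, left_ne_zero_of_mul hj, right_ne_zero_of_mul hj⟩

variable [Fintype n]

lemma sum_mul_apply [NonUnitalNonAssocSemiring R] (M : Matrix l m R) (N : Matrix m n R) (i : l) :
    ∑ k, (M * N) i k = ∑ j, M i j * ∑ k, N j k := by
  simp only [Matrix.mul_apply, Finset.mul_sum]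
  exact Finset.sum_comm

variable [Semiring R] [PartialOrder R] [IsOrderedRing R] {M : Matrix l m R} {N : Matrix m n R}

lemma sum_le_sum_mul_apply_of_one_le_sum {i : l} (hM : ∀ j, 0 ≤ M i j)
    (hN : ∀ j, 1 ≤ ∑ k, N j k) : ∑ j, M i j ≤ ∑ k, (M * N) i k := by
  rw [sum_mul_apply]
  exact Finset.sum_le_sum fun j _ ↦ le_mul_of_one_le_right (hM j) (hN j)

lemma sum_le_sum_mul_apply_of_one_le_apply {i : l} {j : m} (hM : ∀ j, 0 ≤ M i j)
    (hN : ∀ j k, 0 ≤ N j k) (hij : 1 ≤ M i j) : ∑ k, N j k ≤ ∑ k, (M * N) i k := by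
  have hsum (j) : 0 ≤ ∑ k, N j k := Finset.sum_nonneg fun k _ ↦ hN j k
  calc ∑ k, N j k ≤ M i j * ∑ k, N j k := le_mul_of_one_le_left (hsum j) hij
    _ ≤ ∑ j, M i j * ∑ k, N j k :=
      Finset.single_le_sum (f := fun j ↦ M i j * ∑ k, N j k)
        (fun j _ ↦ mul_nonneg (hM j) (hsum j)) (Finset.mem_univ j)
    _ = ∑ k, (M * N) i k := (sum_mul_apply M N i).symm

end Mul

section Pow

variable {ι R : Type*} [Fintype ι] [DecidableEq ι] [Semiring R] {M : Matrix ι ι R}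

lemma mem_of_pow_apply_ne_zero {S : Set ι} (hS : ∀ i j, M i j ≠ 0 → j ∈ S → i ∈ S) {m : ℕ}
    {i j : ι} (h : (M ^ m) i j ≠ 0) (hj : j ∈ S) : i ∈ S := by
  induction m generalizing i with
  | zero =>
    rw [pow_zero] at h
    obtain rfl : i = j := not_imp_comm.1 Matrix.one_apply_ne h
    exact hj
  | succ m ih =>
    rw [pow_succ'] at h
    obtain ⟨l, hil, hlj⟩ := exists_apply_ne_zero_of_mul_apply_ne_zero h
    exact hS i l hil (ih hlj)

variable [PartialOrder R] [IsOrderedRing R]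

lemma monotone_sum_pow_apply (hM : ∀ i j, 0 ≤ M i j) (hrow : ∀ i, 1 ≤ ∑ j, M i j) (i : ι) :
    Monotone fun k : ℕ ↦ ∑ j, (M ^ k) i j := by
  refine monotone_nat_of_le_succ fun k ↦ ?_
  rw [pow_succ]
  exact sum_le_sum_mul_apply_of_one_le_sum (Matrix.pow_apply_nonneg hM k i) hrow

theorem rowSums_pow_ge_two_general (hM : ∀ i j, M i j ≠ 0 → 1 ≤ M i j)
    (hrow : ∀ i, 1 ≤ ∑ j, M i j) {m : ℕ} {i j : ι} (hij : (M ^ m) i j ≠ 0) :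
    ∑ l, M j l ≤ ∑ l, (M ^ Fintype.card ι) i l := by
  classical
  have hM₀ (a b) : 0 ≤ M a b := by
    by_cases hab : M a b = 0
    · exact hab.ge
    · exact zero_le_one.trans (hM a b hab)
  let S (k : ℕ) : Finset ι := {a | ∑ l, M j l ≤ ∑ l, (M ^ (k + 1)) a l}
  have mem_S {k a} : a ∈ S k ↔ ∑ l, M j l ≤ ∑ l, (M ^ (k + 1)) a l := by
    simp only [S, Finset.mem_filter_univ]
  have hS : Monotone S := fun k k' hk a ha ↦ mem_S.2 <|
    (mem_S.1 ha).trans (monotone_sum_pow_apply hM₀ hrow a (Nat.succ_le_succ hk))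
  have hj : j ∈ S 0 := mem_S.2 (by rw [zero_add, pow_one])
  obtain ⟨k, hk, hSk⟩ := exists_lt_card_eq_succ_of_monotone hS ⟨j, hj⟩
  have hclosed (a b) (hab : M a b ≠ 0) (hb : b ∈ S k) : a ∈ S k := by
    rw [hSk, mem_S, pow_succ']
    exact (mem_S.1 hb).trans <| sum_le_sum_mul_apply_of_one_le_apply (hM₀ a)
      (Matrix.pow_apply_nonneg hM₀ (k + 1)) (hM a b hab)
  have hi : i ∈ S k := mem_of_pow_apply_ne_zero (S := S k) hclosed hij (hS k.zero_le hj)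
  exact (mem_S.1 hi).trans (monotone_sum_pow_apply hM₀ hrow i hk)

end Pow

lemma MatIrreducible.one_le_sum {n : ℕ} {B : Matrix (Fin n) (Fin n) ℕ} (hB : MatIrreducible B)
    (i : Fin n) : 1 ≤ ∑ j, B i j := by
  obtain ⟨m, hm, hii⟩ := hB i i
  rw [← mul_pow_sub_one (Nat.one_le_iff_ne_zero.1 hm)] at hii
  obtain ⟨j, hij, -⟩ := exists_apply_ne_zero_of_mul_apply_ne_zero hii.ne'
  exact (Nat.one_le_iff_ne_zero.2 hij).trans
    (Finset.single_le_sum_of_canonicallyOrdered (Finset.mem_univ j))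

/-- If an irreducible nonnegative integral `n × n` matrix `B` has some row sum at
least `2`, then every row sum of `B ^ n` is at least `2`. -/
theorem rowSums_pow_ge_two {n : ℕ} (B : Matrix (Fin n) (Fin n) ℕ)
    (hirr : MatIrreducible B) (hrow : ∃ i₀ : Fin n, 2 ≤ ∑ j, B i₀ j) :
    ∀ i : Fin n, 2 ≤ ∑ j, (B ^ n) i j := by
  obtain ⟨i₀, hi₀⟩ := hrow
  intro i
  obtain ⟨m, -, hm⟩ := hirr i i₀
  simpa only [Fintype.card_fin] using hi₀.trans <|
    rowSums_pow_ge_two_general (fun _ _ ↦ Nat.pos_of_ne_zero) hirr.one_le_sum hm.ne'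
end

section
/- Let L : (ℕ → ℝ) → (ℕ → ℝ) be the linear map defined by (L x) 0 = x 1, (L x) 1 = 2 * x 1, and (L x) i = x (i − 2) for all i ≥ 2. Then 2 is an eigenvalue of L: the nonzero sequence x defined by x (2k) = 2^(−k) and x (2k+1) = 2^(1−k) for all k ≥ 0 satisfies L x = 2 • x. -/
/-!
An eigenvector for `μ ≠ 0` splits by parity into two geometric sequences of ratio `μ⁻¹`, linked only
by `x 1 = μ * x 0`. The self-transition of branch `1` forces `μ` to be its weight unless `x 1 = 0`.
-/

/-- `L` acts on sequences by the matrix of the paper's transition operator on the branches of the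
train track, with the self-transition weight `2` of branch `1` replaced by a parameter `a`. -/
structure IsTransitionOperator {R : Type*} [CommRing R] (a : R) (L : Module.End R (ℕ → R)) :
    Prop where
  apply_zero : ∀ x, L x 0 = x 1
  apply_one : ∀ x, L x 1 = a * x 1
  apply_add_two : ∀ x i, L x (i + 2) = x i

theorem IsTransitionOperator.mem_eigenspace_iff {R : Type*} [CommRing R] {a μ : R}
    {L : Module.End R (ℕ → R)} (hL : IsTransitionOperator a L) {x : ℕ → R} :
    x ∈ L.eigenspace μ ↔
      x 1 = μ * x 0 ∧ a * x 1 = μ * x 1 ∧ ∀ i, x i = μ * x (i + 2) := by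
  rw [Module.End.mem_eigenspace_iff]
  constructor
  · intro hx
    have coord (i : ℕ) : L x i = μ * x i := congrFun hx i
    exact ⟨(hL.apply_zero x).symm.trans (coord 0), (hL.apply_one x).symm.trans (coord 1),
      fun i ↦ (hL.apply_add_two x i).symm.trans (coord (i + 2))⟩
  · rintro ⟨h_zero, h_one, h_add_two⟩
    funext i
    match i with
    | 0 => exact (hL.apply_zero x).trans h_zero
    | 1 => exact (hL.apply_one x).trans h_one
    | i + 2 => exact (hL.apply_add_two x i).trans (h_add_two i)

theorem eq_mul_add_two_of_even_odd_zpow {G₀ : Type*} [GroupWithZero G₀] {μ : G₀} (hμ : μ ≠ 0)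
    {x : ℕ → G₀} {p q : ℤ} (heven : ∀ k : ℕ, x (2 * k) = μ ^ (p - k))
    (hodd : ∀ k : ℕ, x (2 * k + 1) = μ ^ (q - k)) (i : ℕ) :
    x i = μ * x (i + 2) := by
  have zpow_step (n : ℤ) (k : ℕ) : μ ^ (n - k) = μ * μ ^ (n - (k + 1 : ℕ)) := by
    rw [← zpow_one_add₀ hμ]
    congr 1
    push_cast
    ring
  obtain ⟨k, rfl | rfl⟩ := i.even_or_odd'
  · calc
      x (2 * k) = μ * μ ^ (p - (k + 1 : ℕ)) := (heven k).trans (zpow_step p k)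
      _ = μ * x (2 * k + 2) := congrArg (μ * ·) (heven (k + 1)).symm
  · calc
      x (2 * k + 1) = μ * μ ^ (q - (k + 1 : ℕ)) := (hodd k).trans (zpow_step q k)
      _ = μ * x (2 * k + 1 + 2) := congrArg (μ * ·) (hodd (k + 1)).symm

theorem two_is_eigenvalue_general {K : Type*} [Field K] {μ : K} (hμ : μ ≠ 0)
    {L : Module.End K (ℕ → K)} (hL : IsTransitionOperator μ L) {x : ℕ → K}
    (hxeven : ∀ k : ℕ, x (2 * k) = μ ^ (-(k : ℤ)))
    (hxodd : ∀ k : ℕ, x (2 * k + 1) = μ ^ ((1 : ℤ) - (k : ℤ))) :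
    L.HasEigenvector μ x := by
  have x_zero : x 0 = 1 := by simpa using hxeven 0
  have x_one : x 1 = μ := by simpa using hxodd 0
  have x_ne_zero : x ≠ 0 := Function.ne_iff.mpr ⟨0, x_zero.trans_ne one_ne_zero⟩
  have x_step : ∀ i, x i = μ * x (i + 2) :=
    eq_mul_add_two_of_even_odd_zpow hμ (p := 0) (by simpa only [zero_sub] using hxeven) hxodd
  exact ⟨hL.mem_eigenspace_iff.mpr ⟨by rw [x_zero, x_one, mul_one], rfl, x_step⟩, x_ne_zero⟩

/-- `2` is an eigenvalue of the linear operator `L` on real sequences given by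
`(L x) 0 = x 1`, `(L x) 1 = 2 * x 1`, `(L x) i = x (i - 2)` for `i ≥ 2`: the
nonzero sequence with `x (2k) = 2⁻ᵏ` and `x (2k+1) = 2^(1-k)` satisfies
`L x = 2 • x`. -/
theorem two_is_eigenvalue (L : (ℕ → ℝ) →ₗ[ℝ] (ℕ → ℝ))
    (hL0 : ∀ x : ℕ → ℝ, L x 0 = x 1)
    (hL1 : ∀ x : ℕ → ℝ, L x 1 = 2 * x 1)
    (hL2 : ∀ (x : ℕ → ℝ) (i : ℕ), 2 ≤ i → L x i = x (i - 2))
    (x : ℕ → ℝ)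
    (hxeven : ∀ k : ℕ, x (2 * k) = (2 : ℝ) ^ (-(k : ℤ)))
    (hxodd : ∀ k : ℕ, x (2 * k + 1) = (2 : ℝ) ^ ((1 : ℤ) - (k : ℤ))) :
    x ≠ 0 ∧ L x = (2 : ℝ) • x := by
  have hx : Module.End.HasEigenvector L 2 x := two_is_eigenvalue_general two_ne_zero
    ⟨hL0, hL1, fun y i ↦ hL2 y (i + 2) (Nat.le_add_left 2 i)⟩ hxeven hxodd
  exact ⟨hx.2, hx.apply_eq_smul⟩
end

section
/- Let L : (ℕ → ℝ) → (ℕ → ℝ) be the linear map defined by (L x) 0 = x 1, (L x) 1 = 2 * x 1, and (L x) i = x (i − 2) for all i ≥ 2. If λ is a nonzero real number, x : ℕ → ℝ satisfies L x = λ • x, and λ ≠ 2, then x = 0. In other words, the only nonzero eigenvalue of L is 2. -/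
/-!
Every row of `L` has a single nonzero entry, so `L x = λ • x` reads `w i • x (σ i) = λ • x i` for
weights `w` and a self-map `σ` of the index set. At the fixed point `1` of `σ`, of weight `2`, this
forces `x 1 = 0` when `λ ≠ 2`. Since `λ ≠ 0`, zeros of `x` propagate backwards along the orbits
of `σ`, and every orbit ends at `1`.
-/

section WeightedComposition

variable {ι R M : Type*} {σ : ι → ι} {w : ι → R} {lam : R} {x : ι → M}

theorem apply_eq_zero_of_apply_iterate_eq_zero [Semiring R] [IsCancelMulZero R] [AddCommMonoid M]
    [Module R M] [Module.IsTorsionFree R M] (hlam : lam ≠ 0)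
    (hx : ∀ i, w i • x (σ i) = lam • x i) (n : ℕ) {i : ι} (hi : x (σ^[n] i) = 0) : x i = 0 := by
  induction n generalizing i with
  | zero => exact hi
  | succ n ih =>
    have hσ : x (σ i) = 0 := ih hi
    have hsmul : lam • x i = 0 := by rw [← hx i, hσ, smul_zero]
    exact (smul_eq_zero.mp hsmul).resolve_left hlam

variable [Ring R] [IsCancelMulZero R] [AddCommGroup M] [Module R M] [Module.IsTorsionFree R M]

theorem apply_eq_zero_of_isFixedPt {p : ι} (hp : Function.IsFixedPt σ p) (hlam : lam ≠ w p)
    (hx : w p • x (σ p) = lam • x p) : x p = 0 := by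
  rw [hp.eq] at hx
  by_contra hxp
  exact hlam (smul_left_injective R hxp hx).symm

theorem eq_zero_of_forall_exists_iterate_eq_fixedPt {p : ι} (hp : Function.IsFixedPt σ p)
    (horbit : ∀ i, ∃ n, σ^[n] i = p) (hlam0 : lam ≠ 0) (hlam : lam ≠ w p)
    (hx : ∀ i, w i • x (σ i) = lam • x i) : x = 0 := by
  funext i
  obtain ⟨n, hn⟩ := horbit i
  have hxp : x p = 0 := apply_eq_zero_of_isFixedPt hp hlam (hx p)
  exact apply_eq_zero_of_apply_iterate_eq_zero hlam0 hx n (hn ▸ hxp)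

end WeightedComposition

/-- The column of the only entry in row `i` of the matrix of `L` that is not a structural zero. -/
def entryColumn : ℕ → ℕ
  | 0 => 1
  | 1 => 1
  | i + 2 => i

/-- The entry of the matrix of `L` in row `i` and column `entryColumn i`, over an arbitrary
semiring of scalars (in which `2` may vanish). -/
def entryValue (R : Type*) [Semiring R] : ℕ → R
  | 1 => 2
  | _ => 1

theorem isFixedPt_entryColumn_one : Function.IsFixedPt entryColumn 1 := rfl

theorem exists_iterate_entryColumn_eq_one : ∀ i, ∃ n, entryColumn^[n] i = 1
  | 0 => ⟨1, rfl⟩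
  | 1 => ⟨0, rfl⟩
  | i + 2 =>
    let ⟨n, hn⟩ := exists_iterate_entryColumn_eq_one i
    ⟨n + 1, hn⟩

theorem apply_eq_entryValue_smul {R M : Type*} [Semiring R] [AddCommMonoid M] [Module R M]
    {x y : ℕ → M} (h0 : y 0 = x 1) (h1 : y 1 = (2 : R) • x 1)
    (h2 : ∀ i, 2 ≤ i → y i = x (i - 2)) : ∀ i, y i = entryValue R i • x (entryColumn i)
  | 0 => h0.trans (one_smul R _).symm
  | 1 => h1
  | i + 2 => (h2 (i + 2) (Nat.le_add_left 2 i)).trans (one_smul R _).symm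

theorem only_nonzero_eigenvalue_is_two_general {R M : Type*} [Ring R] [IsCancelMulZero R]
    [AddCommGroup M] [Module R M] [Module.IsTorsionFree R M] (L : (ℕ → M) → ℕ → M)
    (hL0 : ∀ x : ℕ → M, L x 0 = x 1)
    (hL1 : ∀ x : ℕ → M, L x 1 = (2 : R) • x 1)
    (hL2 : ∀ (x : ℕ → M) (i : ℕ), 2 ≤ i → L x i = x (i - 2))
    (lam : R) (hlam0 : lam ≠ 0) (hlam2 : lam ≠ 2)
    (x : ℕ → M) (hx : L x = lam • x) :
    x = 0 := by
  have hentry : ∀ i, entryValue R i • x (entryColumn i) = lam • x i := fun i =>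
    (apply_eq_entryValue_smul (hL0 x) (hL1 x) (hL2 x) i).symm.trans (congrFun hx i)
  exact eq_zero_of_forall_exists_iterate_eq_fixedPt isFixedPt_entryColumn_one
    exists_iterate_entryColumn_eq_one hlam0 hlam2 hentry

/-- The linear operator `L` on real sequences given by `(L x) 0 = x 1`,
`(L x) 1 = 2 * x 1`, `(L x) i = x (i - 2)` for `i ≥ 2` has no nonzero eigenvalue
other than `2`: if `L x = λ • x` with `λ ≠ 0` and `λ ≠ 2`, then `x = 0`. -/
theorem only_nonzero_eigenvalue_is_two (L : (ℕ → ℝ) →ₗ[ℝ] (ℕ → ℝ))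
    (hL0 : ∀ x : ℕ → ℝ, L x 0 = x 1)
    (hL1 : ∀ x : ℕ → ℝ, L x 1 = 2 * x 1)
    (hL2 : ∀ (x : ℕ → ℝ) (i : ℕ), 2 ≤ i → L x i = x (i - 2))
    (lam : ℝ) (hlam0 : lam ≠ 0) (hlam2 : lam ≠ 2)
    (x : ℕ → ℝ) (hx : L x = lam • x) :
    x = 0 := by
  exact only_nonzero_eigenvalue_is_two_general L hL0 hL1 hL2 lam hlam0 hlam2 x hx
end
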